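/- Let d ≥ 1 be an integer and let P and Q be (α,C)-controlled probability measures on (0,1)^d for some C > 1 and 0 < α < 1. Then there exists a constant K > 0, depending only on d, C and α, such that for every h > 0 with 1/h a positive integer, W₂²(G_h # P, G_h # Q) ≤ W₂²(P, Q) + K·h^{1+α}. -/

import Mathlib

/-!
Let `G` be the snapping map and `F x = x + (x - G x)` the reflection of `G x` through `x`. On each
cube of side `h` centered at a vertex of the grid, `F` is the coordinatewise doubling map modulo
`h`, so it preserves every density that is constant on these cubes, and hence `P` and `Q` up to a
part of mass `O(h ^ α)`. Replacing `x` by `F x`, or `y` by `F y`, on the preserved part of a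
coupling `γ` of `P` and `Q` gives competitors for `W2sq P Q`, and expanding squares gives
`‖G x - G y‖² + ‖F x - y‖² + ‖x - F y‖² ≤ 3 ‖x - y‖² + O(h²)`. Integrating against a nearly optimal
`γ`, the last two terms on the left contribute at least `2 W2sq P Q - O(h ^ (1 + α))`,
because `F` moves points by `O(h)` and the part left unmoved has mass `O(h ^ α)`.
-/

open MeasureTheory
open scoped ENNReal RealInnerProductSpace

noncomputable section

abbrev Euc (d : ℕ) := EuclideanSpace ℝ (Fin d)

/-- The open unit cube `(0,1)^d`. -/
def unitCube (d : ℕ) : Set (Euc d) := {x | ∀ i, x i ∈ Set.Ioo (0 : ℝ) 1}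

/-- `G_h` : map each point to the center of the axis-aligned grid cell
(of side length `h`) containing it. -/
def gridSnap (d : ℕ) (h : ℝ) (x : Euc d) : Euc d :=
  (EuclideanSpace.equiv (Fin d) ℝ).symm fun i => h * ⌊x i / h⌋ + h / 2

/-- Couplings of two Borel (probability) measures: probability measures on
the product with the prescribed marginals. -/
def Couplings {d : ℕ} (P Q : Measure (Euc d)) : Set (Measure (Euc d × Euc d)) :=
  {γ | IsProbabilityMeasure γ ∧ γ.map Prod.fst = P ∧ γ.map Prod.snd = Q}

/-- Squared 2-Wasserstein distance. -/
def W2sq {d : ℕ} (P Q : Measure (Euc d)) : ℝ :=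
  sInf {r | ∃ γ ∈ Couplings P Q, r = ∫ p, ‖p.1 - p.2‖ ^ 2 ∂γ}

/-- 2-Wasserstein distance. -/
def W2 {d : ℕ} (P Q : Measure (Euc d)) : ℝ := Real.sqrt (W2sq P Q)

/-- `P` and `Q` are `(α, C)`-controlled probability measures on `(0,1)^d`:
they possess densities `μ, ν` w.r.t. Lebesgue measure on `(0,1)^d` whose
`α`-Hölder seminorms sum to at most `C`, and which are bounded between
`C⁻¹` and `C`. -/
def IsControlled (d : ℕ) (α C : ℝ) (P Q : Measure (Euc d)) : Prop :=
  ∃ μ ν : Euc d → ℝ,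
    P = (volume.restrict (unitCube d)).withDensity (fun x => ENNReal.ofReal (μ x)) ∧
    Q = (volume.restrict (unitCube d)).withDensity (fun x => ENNReal.ofReal (ν x)) ∧
    (∃ Cμ Cν : ℝ, 0 ≤ Cμ ∧ 0 ≤ Cν ∧ Cμ + Cν ≤ C ∧
      (∀ x ∈ unitCube d, ∀ y ∈ unitCube d, |μ x - μ y| ≤ Cμ * ‖x - y‖ ^ α) ∧
      (∀ x ∈ unitCube d, ∀ y ∈ unitCube d, |ν x - ν y| ≤ Cν * ‖x - y‖ ^ α)) ∧
    (∀ x ∈ unitCube d, C⁻¹ ≤ μ x ∧ μ x ≤ C) ∧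
    (∀ x ∈ unitCube d, C⁻¹ ≤ ν x ∧ ν x ≤ C)

section Pushforward

variable {X Y : Type*} [MeasurableSpace X] [MeasurableSpace Y] {f : X → Y}

theorem map_withDensity_comp (γ : Measure X) (hf : Measurable f) {g : Y → ℝ≥0∞}
    (hg : Measurable g) : (γ.withDensity (g ∘ f)).map f = (γ.map f).withDensity g := by
  ext s hs
  rw [Measure.map_apply hf hs, withDensity_apply _ (hf hs), withDensity_apply _ hs,
    setLIntegral_map hs hg hf]
  rfl

theorem exists_add_eq_of_map_eq_add {γ : Measure X} [IsFiniteMeasure γ] (hf : Measurable f)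
    {ρ σ : Measure Y} (h : γ.map f = ρ + σ) :
    ∃ γ₁ γ₂, γ = γ₁ + γ₂ ∧ γ₁.map f = ρ ∧ γ₂.map f = σ := by
  have hfin : IsFiniteMeasure (ρ + σ) := h ▸ inferInstance
  have : IsFiniteMeasure ρ := isFiniteMeasure_of_le (ρ + σ) (Measure.le_add_right le_rfl)
  have : IsFiniteMeasure σ := isFiniteMeasure_of_le (ρ + σ) (Measure.le_add_left le_rfl)
  have hsum : ρ.rnDeriv (ρ + σ) + σ.rnDeriv (ρ + σ) =ᵐ[γ.map f] 1 := by
    rw [h]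
    exact (Measure.rnDeriv_add' ρ σ (ρ + σ)).symm.trans (Measure.rnDeriv_self (ρ + σ))
  have hmap (τ : Measure Y) [IsFiniteMeasure τ] (hτ : τ ≪ ρ + σ) :
      (γ.withDensity (τ.rnDeriv (ρ + σ) ∘ f)).map f = τ := by
    rw [map_withDensity_comp γ hf (Measure.measurable_rnDeriv _ _), h,
      Measure.withDensity_rnDeriv_eq _ _ hτ]
  refine ⟨γ.withDensity (ρ.rnDeriv (ρ + σ) ∘ f), γ.withDensity (σ.rnDeriv (ρ + σ) ∘ f), ?_,
    hmap ρ (Measure.le_add_right le_rfl).absolutelyContinuous,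
    hmap σ (Measure.le_add_left le_rfl).absolutelyContinuous⟩
  rw [← withDensity_add_left ((Measure.measurable_rnDeriv _ _).comp hf)]
  conv_lhs => rw [← withDensity_one (μ := γ)]
  exact (withDensity_congr_ae (ae_of_ae_map hf.aemeasurable hsum)).symm

end Pushforward

section InvariantUpTo

variable {X : Type*} [MeasurableSpace X] {F : X → X}

theorem measurePreserving_withDensity {μ : Measure X} (hF : MeasurePreserving F μ μ)
    {g : X → ℝ≥0∞} (hg : Measurable g) (hgF : g ∘ F = g) :
    MeasurePreserving F (μ.withDensity g) (μ.withDensity g) where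
  measurable := hF.measurable
  map_eq := by
    conv_lhs => rw [← hgF]
    rw [map_withDensity_comp μ hF.measurable hg, hF.map_eq]

/-- `F` preserves all of the measure `P` except for a part of mass at most `κ`. -/
def InvariantUpTo (F : X → X) (κ : NNReal) (P : Measure X) : Prop :=
  ∃ ρ σ : Measure X, P = ρ + σ ∧ MeasurePreserving F ρ ρ ∧ σ Set.univ ≤ κ

theorem invariantUpTo_withDensity {ι : Type*} [MeasurableSpace ι] [DiscreteMeasurableSpace ι]
    {κ : NNReal} {μ : Measure X} (hF : MeasurePreserving F μ μ) {I : X → ι} (hI : Measurable I)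
    (hIF : ∀ x, I (F x) = I x) {g : X → ℝ≥0∞}
    (hg : ∫⁻ x, g x - ⨅ y ∈ I ⁻¹' {I x}, g y ∂μ ≤ κ) : InvariantUpTo F κ (μ.withDensity g) := by
  -- The part of density `m ∘ I` is preserved, as `m ∘ I` is constant along the orbits of `F`.
  set m : ι → ℝ≥0∞ := fun n => ⨅ y ∈ I ⁻¹' {n}, g y
  have hm : Measurable (m ∘ I) := Measurable.of_discrete.comp hI
  have hmg : m ∘ I ≤ g := fun x => iInf₂_le (f := fun y (_ : y ∈ I ⁻¹' {I x}) => g y) x rfl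
  refine ⟨μ.withDensity (m ∘ I), μ.withDensity (g - m ∘ I), ?_,
    measurePreserving_withDensity hF hm (funext fun x => congrArg m (hIF x)), ?_⟩
  · rw [← withDensity_add_left hm, add_tsub_cancel_of_le hmg]
  · rwa [withDensity_apply _ .univ, setLIntegral_univ]

end InvariantUpTo

section Wasserstein

variable {d : ℕ} {P Q : Measure (Euc d)} {γ γ₁ γ₂ : Measure (Euc d × Euc d)}
  {F G : Euc d → Euc d} {D r : ℝ} {κ : NNReal}

theorem couplings_nonempty (P Q : Measure (Euc d)) [IsProbabilityMeasure P]
    [IsProbabilityMeasure Q] : (Couplings P Q).Nonempty :=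
  ⟨P.prod Q, inferInstance, by simp, by simp⟩

theorem swap_mem_couplings (hγ : γ ∈ Couplings P Q) : γ.map Prod.swap ∈ Couplings Q P := by
  obtain ⟨_, rfl, rfl⟩ := hγ
  refine ⟨Measure.isProbabilityMeasure_map measurable_swap.aemeasurable, ?_, ?_⟩ <;>
    rw [Measure.map_map (by fun_prop) measurable_swap] <;> rfl

theorem map_prodMap_mem_couplings (hγ : γ ∈ Couplings P Q) (hG : Measurable G) :
    γ.map (Prod.map G G) ∈ Couplings (P.map G) (Q.map G) := by
  obtain ⟨_, rfl, rfl⟩ := hγ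
  refine ⟨Measure.isProbabilityMeasure_map (hG.prodMap hG).aemeasurable, ?_, ?_⟩ <;>
    rw [Measure.map_map (by fun_prop) (hG.prodMap hG), Measure.map_map hG (by fun_prop)] <;> rfl

theorem map_fst_add_mem_couplings (hγ : γ₁ + γ₂ ∈ Couplings P Q)
    (hF : MeasurePreserving F (γ₁.map Prod.fst) (γ₁.map Prod.fst)) :
    γ₁.map (Prod.map F id) + γ₂ ∈ Couplings P Q := by
  obtain ⟨⟨hprob⟩, hP, hQ⟩ := hγ
  have hm : Measurable (Prod.map F id : Euc d × Euc d → Euc d × Euc d) :=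
    hF.measurable.prodMap measurable_id
  refine ⟨⟨?_⟩, ?_, ?_⟩
  · rw [← hprob, Measure.add_apply, Measure.add_apply, Measure.map_apply hm .univ,
      Set.preimage_univ]
  · rw [← hP, Measure.map_add _ _ measurable_fst, Measure.map_add _ _ measurable_fst,
      Measure.map_map measurable_fst hm]
    congr 1
    exact (Measure.map_map hF.measurable measurable_fst).symm.trans hF.map_eq
  · rw [← hQ, Measure.map_add _ _ measurable_snd, Measure.map_add _ _ measurable_snd,
      Measure.map_map measurable_snd hm]
    rfl

theorem W2sq_le_of_mem_couplings (hγ : γ ∈ Couplings P Q) :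
    W2sq P Q ≤ ∫ p, ‖p.1 - p.2‖ ^ 2 ∂γ :=
  csInf_le ⟨0, by rintro _ ⟨γ, -, rfl⟩; positivity⟩ ⟨γ, hγ, rfl⟩

theorem integral_map_swap {E : Type*} [NormedAddCommGroup E] [NormedSpace ℝ E]
    {X Y : Type*} [MeasurableSpace X] [MeasurableSpace Y] (γ : Measure (X × Y)) (f : Y × X → E) :
    ∫ p, f p ∂γ.map Prod.swap = ∫ p, f p.swap ∂γ :=
  MeasurableEquiv.prodComm.measurableEmbedding.integral_map f

theorem W2sq_comm (P Q : Measure (Euc d)) : W2sq P Q = W2sq Q P := by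
  have key (P Q : Measure (Euc d)) :
      {r | ∃ γ ∈ Couplings P Q, r = ∫ p, ‖p.1 - p.2‖ ^ 2 ∂γ} ⊆
        {r | ∃ γ ∈ Couplings Q P, r = ∫ p, ‖p.1 - p.2‖ ^ 2 ∂γ} := by
    rintro _ ⟨γ, hγ, rfl⟩
    refine ⟨γ.map Prod.swap, swap_mem_couplings hγ, ?_⟩
    simp only [integral_map_swap, Prod.fst_swap, Prod.snd_swap, norm_sub_rev]
  exact congrArg sInf ((key P Q).antisymm (key Q P))

theorem W2sq_map_le (hγ : γ ∈ Couplings P Q) (hG : Measurable G) :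
    W2sq (P.map G) (Q.map G) ≤ ∫ p, ‖G p.1 - G p.2‖ ^ 2 ∂γ :=
  (W2sq_le_of_mem_couplings (map_prodMap_mem_couplings hγ hG)).trans_eq
    (integral_map (hG.prodMap hG).aemeasurable (by fun_prop))

theorem exists_mem_couplings_integral_lt [IsProbabilityMeasure P] [IsProbabilityMeasure Q]
    {ε : ℝ} (hε : 0 < ε) : ∃ γ ∈ Couplings P Q, ∫ p, ‖p.1 - p.2‖ ^ 2 ∂γ < W2sq P Q + ε := by
  obtain ⟨γ₀, hγ₀⟩ := couplings_nonempty P Q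
  obtain ⟨_, ⟨γ, hγ, rfl⟩, hlt⟩ :=
    exists_lt_of_csInf_lt (s := {r | ∃ γ ∈ Couplings P Q, r = ∫ p, ‖p.1 - p.2‖ ^ 2 ∂γ})
      ⟨_, γ₀, hγ₀, rfl⟩ (lt_add_of_pos_right (W2sq P Q) hε)
  exact ⟨γ, hγ, hlt⟩

theorem sq_norm_sub_le_sq_norm_sub_add {E : Type*} [SeminormedAddCommGroup E] {x x' y : E}
    {r D : ℝ} (hx : ‖x' - x‖ ≤ r) (hxy : ‖x - y‖ ≤ D) :
    ‖x - y‖ ^ 2 ≤ ‖x' - y‖ ^ 2 + 2 * r * D := by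
  have htri : ‖x - y‖ ≤ r + ‖x' - y‖ := by
    linarith [norm_sub_le_norm_sub_add_norm_sub x x' y, norm_sub_rev x x']
  have hr : 0 ≤ r := (norm_nonneg _).trans hx
  rcases le_total ‖x - y‖ ‖x' - y‖ with hle | hle
  · nlinarith [norm_nonneg (x - y), mul_nonneg hr ((norm_nonneg _).trans hxy)]
  · nlinarith [norm_nonneg (x' - y), mul_le_mul_of_nonneg_left hxy hr]

theorem integrable_sq_norm_of_ae_norm_le {X E : Type*} [MeasurableSpace X] [NormedAddCommGroup E]
    {μ : Measure X} [IsFiniteMeasure μ] {f g : X → E} {r D : ℝ} (hf : AEStronglyMeasurable f μ)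
    (hfg : ∀ x, ‖f x - g x‖ ≤ r) (hg : ∀ᵐ x ∂μ, ‖g x‖ ≤ D) :
    Integrable (fun x => ‖f x‖ ^ 2) μ := by
  have hbound : ∀ᵐ x ∂μ, ‖f x‖ ≤ r + D := by
    filter_upwards [hg] with x hx
    simpa using (norm_add_le (f x - g x) (g x)).trans (add_le_add (hfg x) hx)
  exact (MemLp.of_bound (p := 2) hf _ hbound).integrable_norm_pow two_ne_zero

theorem W2sq_le_integral_map_fst_add (hP : InvariantUpTo F κ P) (hF : Measurable F)
    (hFr : ∀ x, ‖F x - x‖ ≤ r) (hγ : γ ∈ Couplings P Q) (hD : ∀ᵐ p ∂γ, ‖p.1 - p.2‖ ≤ D) :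
    W2sq P Q ≤ ∫ p, ‖F p.1 - p.2‖ ^ 2 ∂γ + 2 * r * D * κ := by
  have := hγ.1
  obtain ⟨ρ, σ, hρσ, hρ, hσ⟩ := hP
  obtain ⟨γ₁, γ₂, rfl, rfl, rfl⟩ :=
    exists_add_eq_of_map_eq_add measurable_fst (hγ.2.1.trans hρσ)
  have hfin₂ : IsFiniteMeasure γ₂ :=
    isFiniteMeasure_of_le (γ₁ + γ₂) (Measure.le_add_left le_rfl)
  have hcost : Integrable (fun p : Euc d × Euc d => ‖p.1 - p.2‖ ^ 2) (γ₁ + γ₂) :=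
    integrable_sq_norm_of_ae_norm_le (r := 0) (by fun_prop) (fun p => by simp) hD
  have hcostF : Integrable (fun p : Euc d × Euc d => ‖F p.1 - p.2‖ ^ 2) (γ₁ + γ₂) :=
    integrable_sq_norm_of_ae_norm_le (by fun_prop) (fun p => by simpa using hFr p.1) hD
  rw [integrable_add_measure] at hcost hcostF
  have hmass : γ₂.real Set.univ ≤ κ := by
    rw [Measure.map_apply measurable_fst .univ] at hσ
    exact ENNReal.toReal_le_coe_of_le_coe hσ
  have hr : 0 ≤ r := (norm_nonneg _).trans (hFr 0)
  have hD₀ : 0 ≤ D := hD.exists.elim fun _ hp => (norm_nonneg _).trans hp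
  have hγ₂ : ∫ p, ‖p.1 - p.2‖ ^ 2 ∂γ₂ ≤ ∫ p, ‖F p.1 - p.2‖ ^ 2 ∂γ₂ + 2 * r * D * κ :=
    calc ∫ p, ‖p.1 - p.2‖ ^ 2 ∂γ₂
        ≤ ∫ p, (‖F p.1 - p.2‖ ^ 2 + 2 * r * D) ∂γ₂ :=
          integral_mono_ae hcost.2 (hcostF.2.add (integrable_const _)) <|
            (ae_add_measure_iff.1 hD).2.mono fun p => sq_norm_sub_le_sq_norm_sub_add (hFr p.1)
      _ = ∫ p, ‖F p.1 - p.2‖ ^ 2 ∂γ₂ + 2 * r * D * γ₂.real Set.univ := by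
          rw [integral_add hcostF.2 (integrable_const _), integral_const, smul_eq_mul, mul_comm]
      _ ≤ ∫ p, ‖F p.1 - p.2‖ ^ 2 ∂γ₂ + 2 * r * D * κ := by gcongr
  have hm : Measurable (Prod.map F id : Euc d × Euc d → Euc d × Euc d) := hF.prodMap measurable_id
  calc W2sq P Q
      ≤ ∫ p, ‖p.1 - p.2‖ ^ 2 ∂(γ₁.map (Prod.map F id) + γ₂) :=
        W2sq_le_of_mem_couplings (map_fst_add_mem_couplings hγ hρ)
    _ = ∫ p, ‖F p.1 - p.2‖ ^ 2 ∂γ₁ + ∫ p, ‖p.1 - p.2‖ ^ 2 ∂γ₂ := by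
        rw [integral_add_measure _ hcost.2, integral_map hm.aemeasurable (by fun_prop)]
        · rfl
        · exact (integrable_map_measure (by fun_prop) hm.aemeasurable).2 hcostF.1
    _ ≤ ∫ p, ‖F p.1 - p.2‖ ^ 2 ∂γ₁ + (∫ p, ‖F p.1 - p.2‖ ^ 2 ∂γ₂ + 2 * r * D * κ) := by
        gcongr
    _ = ∫ p, ‖F p.1 - p.2‖ ^ 2 ∂(γ₁ + γ₂) + 2 * r * D * κ := by
        rw [integral_add_measure hcostF.1 hcostF.2, add_assoc]

theorem W2sq_le_integral_map_snd_add (hQ : InvariantUpTo F κ Q) (hF : Measurable F)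
    (hFr : ∀ x, ‖F x - x‖ ≤ r) (hγ : γ ∈ Couplings P Q) (hD : ∀ᵐ p ∂γ, ‖p.1 - p.2‖ ≤ D) :
    W2sq P Q ≤ ∫ p, ‖p.1 - F p.2‖ ^ 2 ∂γ + 2 * r * D * κ := by
  have hD' : ∀ᵐ p ∂γ.map Prod.swap, ‖p.1 - p.2‖ ≤ D := by
    refine (ae_map_iff measurable_swap.aemeasurable
      (measurableSet_le (by fun_prop) measurable_const)).2 ?_
    simpa only [Prod.fst_swap, Prod.snd_swap, norm_sub_rev] using hD
  have h := W2sq_le_integral_map_fst_add hQ hF hFr (swap_mem_couplings hγ) hD'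
  rw [W2sq_comm, integral_map_swap] at h
  simpa only [Prod.fst_swap, Prod.snd_swap, norm_sub_rev] using h

theorem sq_norm_sub_add_add_sq_norm_add_add_sq_norm_sub_le {E : Type*} [NormedAddCommGroup E]
    [InnerProductSpace ℝ E] {a b : E} {r : ℝ} (ha : ‖a‖ ≤ r) (hb : ‖b‖ ≤ r) (u : E) :
    ‖u - a + b‖ ^ 2 + ‖u + a‖ ^ 2 + ‖u - b‖ ^ 2 ≤ 3 * ‖u‖ ^ 2 + 6 * r ^ 2 := by
  have hexpand : ‖u - a + b‖ ^ 2 + ‖u + a‖ ^ 2 + ‖u - b‖ ^ 2 =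
      3 * ‖u‖ ^ 2 + 2 * ‖a‖ ^ 2 + 2 * ‖b‖ ^ 2 - 2 * ⟪a, b⟫ := by
    simp only [norm_add_sq_real, norm_sub_sq_real, inner_sub_left]
    ring
  have hab : -⟪a, b⟫ ≤ r * r := (neg_le_abs _).trans <|
    (abs_real_inner_le_norm a b).trans (mul_le_mul ha hb (norm_nonneg b) ((norm_nonneg a).trans ha))
  nlinarith [norm_nonneg a, norm_nonneg b]

theorem integral_cost_map_add_cost_reflect_le [IsProbabilityMeasure γ] (hG : Measurable G)
    (hGr : ∀ x, ‖x - G x‖ ≤ r) (hD : ∀ᵐ p ∂γ, ‖p.1 - p.2‖ ≤ D) :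
    ∫ p, ‖G p.1 - G p.2‖ ^ 2 ∂γ + ∫ p, ‖p.1 + (p.1 - G p.1) - p.2‖ ^ 2 ∂γ +
        ∫ p, ‖p.1 - (p.2 + (p.2 - G p.2))‖ ^ 2 ∂γ ≤
      3 * ∫ p, ‖p.1 - p.2‖ ^ 2 ∂γ + 6 * r ^ 2 := by
  have hGG : Integrable (fun p => ‖G p.1 - G p.2‖ ^ 2) γ :=
    integrable_sq_norm_of_ae_norm_le (r := r + r) (by fun_prop) (fun p => by
      rw [norm_sub_rev, sub_sub_sub_comm]
      exact (norm_sub_le _ _).trans (add_le_add (hGr _) (hGr _))) hD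
  have hF₁ : Integrable (fun p : Euc d × Euc d => ‖p.1 + (p.1 - G p.1) - p.2‖ ^ 2) γ :=
    integrable_sq_norm_of_ae_norm_le (by fun_prop) (fun p => by simpa using hGr p.1) hD
  have hF₂ : Integrable (fun p : Euc d × Euc d => ‖p.1 - (p.2 + (p.2 - G p.2))‖ ^ 2) γ :=
    integrable_sq_norm_of_ae_norm_le (by fun_prop)
      (fun p => by simpa [norm_sub_rev] using hGr p.2) hD
  have hcost : Integrable (fun p : Euc d × Euc d => ‖p.1 - p.2‖ ^ 2) γ :=
    integrable_sq_norm_of_ae_norm_le (r := 0) (by fun_prop) (fun p => by simp) hD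
  have hGGF : Integrable
      (fun p => ‖G p.1 - G p.2‖ ^ 2 + ‖p.1 + (p.1 - G p.1) - p.2‖ ^ 2) γ := hGG.add hF₁
  rw [← integral_add hGG hF₁, ← integral_add hGGF hF₂]
  calc _ ≤ ∫ p, (3 * ‖p.1 - p.2‖ ^ 2 + 6 * r ^ 2) ∂γ := by
        refine integral_mono (hGGF.add hF₂) ((hcost.const_mul 3).add (integrable_const _))
          fun p => ?_
        have h := sq_norm_sub_add_add_sq_norm_add_add_sq_norm_sub_le (hGr p.1) (hGr p.2)
          (p.1 - p.2)
        rwa [show p.1 - p.2 - (p.1 - G p.1) + (p.2 - G p.2) = G p.1 - G p.2 by abel,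
          sub_add_eq_add_sub, sub_sub p.1 p.2] at h
    _ = _ := by
        rw [integral_add (hcost.const_mul 3) (integrable_const _), integral_const_mul]
        simp

theorem W2sq_map_le_W2sq_add [IsProbabilityMeasure P] [IsProbabilityMeasure Q] {K : Set (Euc d)}
    (hG : Measurable G) (hGr : ∀ x, ‖x - G x‖ ≤ r)
    (hP : InvariantUpTo (fun x => x + (x - G x)) κ P)
    (hQ : InvariantUpTo (fun x => x + (x - G x)) κ Q)
    (hPK : ∀ᵐ x ∂P, x ∈ K) (hQK : ∀ᵐ x ∂Q, x ∈ K) (hK : ∀ x ∈ K, ∀ y ∈ K, ‖x - y‖ ≤ D) :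
    W2sq (P.map G) (Q.map G) ≤ W2sq P Q + (4 * r * D * κ + 6 * r ^ 2) := by
  set F : Euc d → Euc d := fun x => x + (x - G x)
  have hF : Measurable F := by fun_prop
  have hFr (x : Euc d) : ‖F x - x‖ ≤ r := by simpa [F] using hGr x
  refine le_of_forall_pos_le_add fun ε hε => ?_
  obtain ⟨γ, hγ, hlt⟩ := exists_mem_couplings_integral_lt (P := P) (Q := Q)
    (show 0 < ε / 3 by positivity)
  have hγprob := hγ.1
  have hD : ∀ᵐ p ∂γ, ‖p.1 - p.2‖ ≤ D := by
    rw [← hγ.2.1] at hPK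
    rw [← hγ.2.2] at hQK
    filter_upwards [ae_of_ae_map measurable_fst.aemeasurable hPK,
      ae_of_ae_map measurable_snd.aemeasurable hQK] with p hp₁ hp₂ using hK _ hp₁ _ hp₂
  have hle₁ := W2sq_le_integral_map_fst_add hP hF hFr hγ hD
  have hle₂ := W2sq_le_integral_map_snd_add hQ hF hFr hγ hD
  have hleG := W2sq_map_le hγ hG
  linarith [integral_cost_map_add_cost_reflect_le hG hGr hD]

end Wasserstein

section Doubling

variable {d : ℕ} {h : ℝ}

/-- The point symmetric to the center of the grid cell of `t` with respect to `t`. On each interval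
of length `h` centered at a multiple of `h` this is the doubling map modulo `h`. The
map `x ↦ x + (x - gridSnap d h x)` applies it to every coordinate. -/
def gridReflect (h t : ℝ) : ℝ := t + (t - (h * ⌊t / h⌋ + h / 2))

theorem measurable_gridReflect (h : ℝ) : Measurable (gridReflect h) := by
  unfold gridReflect
  fun_prop

theorem round_gridReflect_div (hh : h ≠ 0) (t : ℝ) :
    round (gridReflect h t / h) = round (t / h) := by
  have hdiv : gridReflect h t / h + 1 / 2 = t / h + Int.fract (t / h) := by
    rw [gridReflect, Int.fract]
    field_simp
    ring
  have := Int.fract_nonneg (t / h)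
  have := Int.fract_lt_one (t / h)
  have := Int.floor_add_fract (t / h)
  rw [round_eq, round_eq, hdiv, eq_comm]
  rcases lt_or_ge (Int.fract (t / h)) (1 / 2) with hlt | hge
  · trans ⌊t / h⌋
    · exact Int.floor_eq_iff.2 ⟨by linarith, by linarith⟩
    · exact (Int.floor_eq_iff.2 ⟨by linarith, by linarith⟩).symm
  · trans ⌊t / h⌋ + 1
    · exact Int.floor_eq_iff.2 ⟨by push_cast; linarith, by push_cast; linarith⟩
    · exact (Int.floor_eq_iff.2 ⟨by push_cast; linarith, by push_cast; linarith⟩).symm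

theorem measure_eq_tsum_inter_Ico (μ : Measure ℝ) (hh : 0 < h) (a : ℝ) (s : Set ℝ) :
    μ s = ∑' n : ℤ, μ (s ∩ Set.Ico (a + n * h) (a + (n + 1) * h)) := by
  have hdisj := Set.pairwise_disjoint_Ico_add_zsmul a h
  have hcover := iUnion_Ico_add_zsmul hh a
  simp only [zsmul_eq_mul, Int.cast_add, Int.cast_one] at hdisj hcover
  rw [← Measure.restrict_apply_univ, ← hcover, measure_iUnion hdisj fun n => measurableSet_Ico]
  simp_rw [Measure.restrict_apply measurableSet_Ico, Set.inter_comm]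

theorem volume_gridReflect_preimage_inter_Ico (hh : 0 < h) (s : Set ℝ) (n : ℤ) :
    volume (gridReflect h ⁻¹' s ∩ Set.Ico (n * h) ((n + 1) * h)) =
      2⁻¹ * volume (s ∩ Set.Ico ((n - 1 / 2) * h) ((n + 3 / 2) * h)) := by
  have haffine : gridReflect h ⁻¹' s ∩ Set.Ico (n * h) ((n + 1) * h) =
      (2 * ·) ⁻¹' ((· + -((n + 1 / 2) * h)) ⁻¹'
        (s ∩ Set.Ico ((n - 1 / 2) * h) ((n + 3 / 2) * h))) := by
    ext t
    have hmem : t ∈ Set.Ico (n * h) ((n + 1) * h) ↔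
        2 * t + -((n + 1 / 2) * h) ∈ Set.Ico ((n - 1 / 2) * h) ((n + 3 / 2) * h) := by
      simp only [Set.mem_Ico]
      constructor <;> rintro ⟨h₁, h₂⟩ <;> constructor <;> linarith
    have heq (ht : t ∈ Set.Ico (n * h) ((n + 1) * h)) :
        gridReflect h t = 2 * t + -((n + 1 / 2) * h) := by
      have hfloor : ⌊t / h⌋ = n :=
        Int.floor_eq_iff.2 ⟨(le_div_iff₀ hh).2 ht.1, (div_lt_iff₀ hh).2 ht.2⟩
      rw [gridReflect, hfloor]
      ring
    simp only [Set.mem_inter_iff, Set.mem_preimage, ← hmem]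
    exact and_congr_left fun ht => by rw [heq ht]
  rw [haffine, Real.volume_preimage_mul_left two_ne_zero, measure_preimage_add_right,
    abs_of_pos (by norm_num), ENNReal.ofReal_inv_of_pos two_pos, ENNReal.ofReal_ofNat]

theorem measurePreserving_gridReflect (hh : 0 < h) : MeasurePreserving (gridReflect h) := by
  refine ⟨measurable_gridReflect h, ?_⟩
  ext s hs
  rw [Measure.map_apply (measurable_gridReflect h) hs]
  set v : ℤ → ℝ≥0∞ := fun n => volume (s ∩ Set.Ico ((n - 1 / 2) * h) ((n + 1 / 2) * h))
  have hv : volume s = ∑' n, v n := by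
    rw [measure_eq_tsum_inter_Ico volume hh (-(1 / 2) * h) s]
    refine tsum_congr fun n => ?_
    congr! 3 <;> ring
  have hcell (n : ℤ) : volume (gridReflect h ⁻¹' s ∩ Set.Ico (0 + n * h) (0 + (n + 1) * h)) =
      2⁻¹ * (v n + v (n + 1)) := by
    rw [zero_add, zero_add, volume_gridReflect_preimage_inter_Ico hh,
      ← Set.Ico_union_Ico_eq_Ico (b := (n + 1 / 2) * h) (by gcongr; linarith)
        (by gcongr; linarith), Set.inter_union_distrib_left,
      measure_union ?_ (hs.inter measurableSet_Ico)]
    · simp only [v, Int.cast_add, Int.cast_one]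
      rw [show (n : ℝ) + 1 - 1 / 2 = n + 1 / 2 by ring,
        show (n : ℝ) + 1 + 1 / 2 = n + 3 / 2 by ring]
    · exact (Set.Ico_disjoint_Ico_same).mono Set.inter_subset_right Set.inter_subset_right
  have hshift : ∑' n, v (n + 1) = ∑' n, v n := (Equiv.addRight (1 : ℤ)).tsum_eq v
  calc volume (gridReflect h ⁻¹' s)
      = ∑' n, 2⁻¹ * (v n + v (n + 1)) := by
        rw [measure_eq_tsum_inter_Ico volume hh 0, tsum_congr hcell]
    _ = 2⁻¹ * (∑' n, v n + ∑' n, v n) := by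
        rw [ENNReal.tsum_mul_left, ENNReal.tsum_add, hshift]
    _ = volume s := by
        rw [hv, ← two_mul, ← mul_assoc, ENNReal.inv_mul_cancel two_ne_zero ENNReal.ofNat_ne_top,
          one_mul]

theorem measurePreserving_add_sub_gridSnap (d : ℕ) (hh : 0 < h) :
    MeasurePreserving fun x : Euc d => x + (x - gridSnap d h x) :=
  (PiLp.volume_preserving_toLp (Fin d)).comp <|
    (volume_preserving_pi fun _ => measurePreserving_gridReflect hh).comp
      (PiLp.volume_preserving_ofLp (Fin d))

theorem measurable_gridSnap (d : ℕ) (h : ℝ) : Measurable (gridSnap d h) := by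
  unfold gridSnap
  fun_prop

theorem norm_sub_le_of_forall_abs_sub_le {x y : Euc d} {r : ℝ} (hr : 0 ≤ r)
    (hxy : ∀ i, |x i - y i| ≤ r) : ‖x - y‖ ≤ √d * r := by
  rw [EuclideanSpace.norm_eq]
  refine Real.sqrt_le_iff.2 ⟨by positivity, ?_⟩
  calc ∑ i, ‖(x - y) i‖ ^ 2 ≤ ∑ _i : Fin d, r ^ 2 :=
        Finset.sum_le_sum fun i _ => pow_le_pow_left₀ (norm_nonneg _) (hxy i) 2
    _ = (√d * r) ^ 2 := by rw [mul_pow, Real.sq_sqrt d.cast_nonneg]; simp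

theorem norm_sub_gridSnap_le (d : ℕ) (hh : 0 < h) (x : Euc d) :
    ‖x - gridSnap d h x‖ ≤ √d * (h / 2) := by
  refine norm_sub_le_of_forall_abs_sub_le (by positivity) fun i => ?_
  have hoffset : x i - gridSnap d h x i = h * (Int.fract (x i / h) - 1 / 2) := by
    change x i - (h * ⌊x i / h⌋ + h / 2) = _
    rw [Int.fract]
    field_simp
    ring
  have hfract : |Int.fract (x i / h) - 1 / 2| ≤ 1 / 2 :=
    abs_le.2 ⟨by linarith [Int.fract_nonneg (x i / h)], by linarith [Int.fract_lt_one (x i / h)]⟩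
  rw [hoffset, abs_mul, abs_of_pos hh]
  linarith [mul_le_mul_of_nonneg_left hfract hh.le]

end Doubling

section Cube

variable {d L : ℕ} {h : ℝ}

theorem setOf_forall_apply_mem_eq (s : Set ℝ) :
    {x : Euc d | ∀ i, x i ∈ s} = WithLp.ofLp ⁻¹' Set.univ.pi fun _ => s := by
  ext x
  simp

theorem measurableSet_setOf_forall_apply_mem {s : Set ℝ} (hs : MeasurableSet s) :
    MeasurableSet {x : Euc d | ∀ i, x i ∈ s} :=
  setOf_forall_apply_mem_eq s ▸
    (PiLp.volume_preserving_ofLp (Fin d)).measurable (.univ_pi fun _ => hs)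

theorem volume_setOf_forall_apply_mem {s : Set ℝ} (hs : MeasurableSet s) :
    volume {x : Euc d | ∀ i, x i ∈ s} = volume s ^ d := by
  rw [setOf_forall_apply_mem_eq, (PiLp.volume_preserving_ofLp (Fin d)).measure_preimage
    (MeasurableSet.univ_pi fun _ => hs).nullMeasurableSet, volume_pi_pi, Finset.prod_const,
    Finset.card_univ, Fintype.card_fin]

theorem measurableSet_unitCube (d : ℕ) : MeasurableSet (unitCube d) :=
  measurableSet_setOf_forall_apply_mem measurableSet_Ioo

theorem volume_unitCube (d : ℕ) : volume (unitCube d) = 1 :=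
  (volume_setOf_forall_apply_mem measurableSet_Ioo).trans (by simp)

theorem norm_sub_le_of_mem_unitCube {x y : Euc d} (hx : x ∈ unitCube d) (hy : y ∈ unitCube d) :
    ‖x - y‖ ≤ √d := by
  refine (norm_sub_le_of_forall_abs_sub_le zero_le_one fun i => ?_).trans_eq (mul_one _)
  rw [abs_le]
  constructor <;> linarith [(hx i).1, (hx i).2, (hy i).1, (hy i).2]

/-- Index of the cell containing `x` in the dual grid, whose cells are centered at the vertices
`h • ℤ ^ d` of the original grid. -/
def dualIndex (d : ℕ) (h : ℝ) (x : Euc d) : Fin d → ℤ := fun i => round (x i / h)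

theorem measurable_dualIndex (d : ℕ) (h : ℝ) : Measurable (dualIndex d h) := by
  unfold dualIndex
  simp only [round_eq]
  fun_prop

theorem norm_sub_le_of_dualIndex_eq (hh : 0 < h) {x y : Euc d}
    (hxy : dualIndex d h x = dualIndex d h y) : ‖x - y‖ ≤ √d * h := by
  refine norm_sub_le_of_forall_abs_sub_le hh.le fun i => ?_
  have hround : round (x i / h) = round (y i / h) := congrFun hxy i
  have hx := abs_le.1 (abs_sub_round (x i / h))
  have hy := abs_le.1 (abs_sub_round (y i / h))
  rw [hround] at hx
  have hdiv : |x i / h - y i / h| ≤ 1 :=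
    abs_le.2 ⟨by linarith [hx.1, hy.2], by linarith [hx.2, hy.1]⟩
  rwa [← sub_div, abs_div, abs_of_pos hh, div_le_one hh] at hdiv

/-- The union of the cells of the dual grid that lie inside the unit cube, for `h = 1 / L`: the
cells of index `0` or `L` in some coordinate are cut by its boundary. -/
def dualInterior (d L : ℕ) (h : ℝ) : Set (Euc d) :=
  {x | ∀ i, dualIndex d h x i ∈ Set.Ioo 0 (L : ℤ)}

theorem dualInterior_eq (hh : 0 < h) (hL : h * L = 1) :
    dualInterior d L h = {x : Euc d | ∀ i, x i ∈ Set.Ico (h / 2) (1 - h / 2)} := by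
  ext x
  refine forall_congr' fun i => and_congr ?_ ?_ <;> simp only [dualIndex, round_eq]
  · rw [← Int.add_one_le_iff, Int.le_floor, ← sub_le_iff_le_add, le_div_iff₀ hh]
    push_cast
    constructor <;> intro <;> linarith
  · rw [Int.floor_lt, ← lt_sub_iff_add_lt, div_lt_iff₀ hh]
    push_cast
    constructor <;> intro <;> linarith

theorem measurableSet_dualInterior (d L : ℕ) (h : ℝ) : MeasurableSet (dualInterior d L h) :=
  measurable_dualIndex d h (.of_discrete (s := {n : Fin d → ℤ | ∀ i, n i ∈ Set.Ioo 0 (L : ℤ)}))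

theorem dualInterior_subset_unitCube (hh : 0 < h) (hL : h * L = 1) :
    dualInterior d L h ⊆ unitCube d := by
  rw [dualInterior_eq hh hL]
  exact fun x hx i => ⟨by linarith [(hx i).1], by linarith [(hx i).2]⟩

theorem volume_unitCube_diff_dualInterior_le (hh : 0 < h) (hL : h * L = 1) :
    volume (unitCube d \ dualInterior d L h) ≤ ENNReal.ofReal (d * h) := by
  have hh₁ : h ≤ 1 := (eq_inv_of_mul_eq_one_left hL).trans_le (Nat.cast_inv_le_one L)
  have hvol : volume (dualInterior d L h) = ENNReal.ofReal ((1 - h) ^ d) := by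
    rw [dualInterior_eq hh hL, volume_setOf_forall_apply_mem measurableSet_Ico, Real.volume_Ico,
      ← ENNReal.ofReal_pow (by linarith), sub_sub, add_halves]
  have hbernoulli : 1 + d * (1 - h - 1) ≤ (1 - h) ^ d :=
    one_add_mul_sub_le_pow (by linarith) d
  rw [measure_sdiff (dualInterior_subset_unitCube hh hL)
    (measurableSet_dualInterior d L h).nullMeasurableSet (hvol ▸ ENNReal.ofReal_ne_top), hvol,
    volume_unitCube, ← ENNReal.ofReal_one, ← ENNReal.ofReal_sub _ (pow_nonneg (sub_nonneg.2 hh₁) d)]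
  exact ENNReal.ofReal_le_ofReal (by linarith)

end Cube

section Holder

variable {d L : ℕ} {C α h : NNReal} {P Q : Measure (Euc d)}

/-- `P` is carried by the unit cube, where it has a density that is `α`-Hölder with constant `C`. -/
def HasHolderDensity (C α : NNReal) (P : Measure (Euc d)) : Prop :=
  ∃ f : Euc d → NNReal, HolderOnWith C α f (unitCube d) ∧
    P = (volume.restrict (unitCube d)).withDensity fun x => f x

theorem HasHolderDensity.ae_mem_unitCube (hP : HasHolderDensity C α P) :
    ∀ᵐ x ∂P, x ∈ unitCube d := by
  obtain ⟨f, -, rfl⟩ := hP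
  exact (withDensity_absolutelyContinuous _ _).ae_le (ae_restrict_mem (measurableSet_unitCube d))

theorem le_add_of_holderOnWith {X : Type*} [PseudoMetricSpace X] {f : X → NNReal} {s : Set X}
    (hf : HolderOnWith C α f s) {x y : X} {r : NNReal} (hx : x ∈ s) (hy : y ∈ s)
    (hxy : dist x y ≤ r) : f x ≤ f y + C * r ^ (α : ℝ) :=
  (NNReal.le_add_nndist _ _).trans (add_le_add_right (hf.nndist_le_of_le hx hy hxy) _)

theorem le_one_add_of_holderOnWith {f : Euc d → NNReal} (hf : HolderOnWith C α f (unitCube d))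
    (hprob : ∫⁻ x in unitCube d, f x = 1) {x : Euc d} (hx : x ∈ unitCube d) :
    f x ≤ 1 + C * NNReal.sqrt d ^ (α : ℝ) := by
  have hdiam {y : Euc d} (hy : y ∈ unitCube d) : dist x y ≤ NNReal.sqrt d := by
    simpa [dist_eq_norm] using norm_sub_le_of_mem_unitCube hx hy
  have hle : ∫⁻ _ in unitCube d, f x ≤
      ∫⁻ y in unitCube d, (f y + (C * NNReal.sqrt d ^ (α : ℝ) : NNReal)) :=
    setLIntegral_mono' (measurableSet_unitCube d) fun y hy =>
      mod_cast le_add_of_holderOnWith hf hx hy (hdiam hy)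
  rw [lintegral_add_right _ measurable_const, hprob, setLIntegral_const, setLIntegral_const,
    volume_unitCube, mul_one, mul_one] at hle
  exact_mod_cast hle

theorem indicator_sub_iInf_dualIndex_le {f : Euc d → ℝ≥0∞} {ω M : ℝ≥0∞} {h : ℝ}
    (hω : ∀ x ∈ unitCube d, ∀ y ∈ unitCube d, dist x y ≤ √d * h → f x ≤ f y + ω)
    (hM : ∀ x ∈ unitCube d, f x ≤ M) (hh : 0 < h) (hL : h * L = 1) (x : Euc d) :
    (unitCube d).indicator f x -
        ⨅ y ∈ dualIndex d h ⁻¹' {dualIndex d h x}, (unitCube d).indicator f y ≤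
      (unitCube d).indicator (fun _ => ω) x +
        (unitCube d \ dualInterior d L h).indicator (fun _ => M) x := by
  by_cases hx : x ∈ unitCube d
  · rw [Set.indicator_of_mem hx, Set.indicator_of_mem hx]
    by_cases hxi : x ∈ dualInterior d L h
    · rw [Set.indicator_of_notMem (fun hx' => hx'.2 hxi), add_zero, tsub_le_iff_tsub_le]
      refine le_iInf₂ fun y hy => ?_
      have hyx : dualIndex d h y = dualIndex d h x := hy
      have hyi : y ∈ dualInterior d L h := fun i => hyx ▸ hxi i
      have hy' := dualInterior_subset_unitCube hh hL hyi
      rw [Set.indicator_of_mem hy', tsub_le_iff_right]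
      exact hω x hx y hy' ((dist_eq_norm x y).trans_le (norm_sub_le_of_dualIndex_eq hh hyx.symm))
    · rw [Set.indicator_of_mem (show x ∈ unitCube d \ dualInterior d L h from ⟨hx, hxi⟩)]
      exact tsub_le_self.trans ((hM x hx).trans le_add_self)
  · simp [hx]

theorem HasHolderDensity.invariantUpTo [IsProbabilityMeasure P] (hP : HasHolderDensity C α P)
    (hh : 0 < h) (hL : h * L = 1) :
    InvariantUpTo (fun x => x + (x - gridSnap d h x))
      (C * (NNReal.sqrt d * h) ^ (α : ℝ) + (1 + C * NNReal.sqrt d ^ (α : ℝ)) * (d * h)) P := by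
  obtain ⟨f, hf, rfl⟩ := hP
  have hprob : ∫⁻ x in unitCube d, f x = 1 := by
    have := measure_univ (μ := (volume.restrict (unitCube d)).withDensity fun x => (f x : ℝ≥0∞))
    rwa [withDensity_apply _ .univ, setLIntegral_univ] at this
  have hω (x) (hx : x ∈ unitCube d) (y) (hy : y ∈ unitCube d) (hxy : dist x y ≤ √d * h) :
      (f x : ℝ≥0∞) ≤ f y + (C * (NNReal.sqrt d * h) ^ (α : ℝ) : NNReal) :=
    mod_cast le_add_of_holderOnWith hf hx hy (hxy.trans_eq (by simp))
  have hM (x) (hx : x ∈ unitCube d) :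
      (f x : ℝ≥0∞) ≤ (1 + C * NNReal.sqrt d ^ (α : ℝ) : NNReal) :=
    mod_cast le_one_add_of_holderOnWith hf hprob hx
  have hL' : (h * L : ℝ) = 1 := mod_cast hL
  rw [← withDensity_indicator (measurableSet_unitCube d)]
  refine invariantUpTo_withDensity (measurePreserving_add_sub_gridSnap d hh)
    (measurable_dualIndex d h)
    (fun x => funext fun i => round_gridReflect_div (NNReal.coe_pos.2 hh).ne' (x i))
    ((lintegral_mono (indicator_sub_iInf_dualIndex_le hω hM hh hL')).trans ?_)
  rw [lintegral_add_left (measurable_const.indicator (measurableSet_unitCube d)),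
    lintegral_indicator_const (measurableSet_unitCube d), lintegral_indicator_const
    ((measurableSet_unitCube d).diff (measurableSet_dualInterior d L h)), volume_unitCube, mul_one,
    ENNReal.coe_add (C * _), ENNReal.coe_mul (1 + _)]
  gcongr
  simpa using volume_unitCube_diff_dualInterior_le hh hL'

theorem W2sq_map_gridSnap_le [IsProbabilityMeasure P] [IsProbabilityMeasure Q]
    (hP : HasHolderDensity C α P) (hQ : HasHolderDensity C α Q) (hα : α ≤ 1)
    (hh : 0 < h) (hL : h * L = 1) :
    W2sq (P.map (gridSnap d h)) (Q.map (gridSnap d h)) ≤ W2sq P Q +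
      (2 * d * (C * √d ^ (α : ℝ) + (1 + C * √d ^ (α : ℝ)) * d) + 3 / 2 * d) *
        (h : ℝ) ^ (1 + α : ℝ) := by
  have hh' : (0 : ℝ) < h := hh
  have hh₁ : h ≤ 1 := (eq_inv_of_mul_eq_one_left hL).trans_le (Nat.cast_inv_le_one L)
  have hpow : (h : ℝ) ^ (1 + α : ℝ) = h * (h : ℝ) ^ (α : ℝ) := by
    rw [Real.rpow_add hh', Real.rpow_one]
  have hsq : (h : ℝ) ^ 2 ≤ (h : ℝ) ^ (1 + α : ℝ) := by
    rw [← Real.rpow_two]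
    exact Real.rpow_le_rpow_of_exponent_ge hh' hh₁ (by linarith [NNReal.coe_le_one.2 hα])
  have hsqrt : √(d : ℝ) * √(d : ℝ) = d := Real.mul_self_sqrt d.cast_nonneg
  refine (W2sq_map_le_W2sq_add (measurable_gridSnap d h) (norm_sub_gridSnap_le d hh)
    (hP.invariantUpTo hh hL) (hQ.invariantUpTo hh hL) hP.ae_mem_unitCube
    hQ.ae_mem_unitCube fun x hx y hy => norm_sub_le_of_mem_unitCube hx hy).trans ?_
  gcongr
  set A : ℝ := C * √d ^ (α : ℝ)
  calc _ = 2 * d * (A * (h * (h : ℝ) ^ (α : ℝ)) + (1 + A) * d * (h : ℝ) ^ 2) +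
          3 / 2 * d * (h : ℝ) ^ 2 := by
        push_cast
        rw [Real.mul_rpow (Real.sqrt_nonneg _) hh'.le]
        linear_combination
          (2 * h * (C * (√d ^ (α : ℝ) * (h : ℝ) ^ (α : ℝ)) + (1 + A) * (d * h)) + 3 / 2 * h ^ 2) *
            hsqrt
    _ ≤ 2 * d * (A * (h : ℝ) ^ (1 + α : ℝ) + (1 + A) * d * (h : ℝ) ^ (1 + α : ℝ)) +
          3 / 2 * d * (h : ℝ) ^ (1 + α : ℝ) := by
        rw [← hpow]
        gcongr
    _ = _ := by ring

end Holder

section Controlled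

variable {d : ℕ} {α C : NNReal} {P Q : Measure (Euc d)}

theorem hasHolderDensity_of_forall_abs_sub_le {f : Euc d → ℝ}
    (hf : ∀ x ∈ unitCube d, ∀ y ∈ unitCube d, |f x - f y| ≤ C * ‖x - y‖ ^ (α : ℝ)) :
    HasHolderDensity C α
      ((volume.restrict (unitCube d)).withDensity fun x => ENNReal.ofReal (f x)) := by
  refine ⟨fun x => (f x).toNNReal, fun x hx y hy => ?_, rfl⟩
  rw [edist_nndist, edist_nndist, ← ENNReal.coe_rpow_of_nonneg _ α.coe_nonneg, ← ENNReal.coe_mul,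
    ENNReal.coe_le_coe]
  have hlip : dist (f x).toNNReal (f y).toNNReal ≤ dist (f x) (f y) := by
    simpa using Real.lipschitzWith_toNNReal.dist_le_mul (f x) (f y)
  exact hlip.trans ((hf x hx y hy).trans_eq (by rw [← dist_eq_norm]; rfl))

theorem IsControlled.hasHolderDensity (hPQ : IsControlled d α C P Q) :
    HasHolderDensity C α P ∧ HasHolderDensity C α Q := by
  obtain ⟨μ, ν, rfl, rfl, ⟨Cμ, Cν, hCμ, hCν, hC, hμ, hν⟩, -⟩ := hPQ
  constructor <;> refine hasHolderDensity_of_forall_abs_sub_le fun x hx y hy => ?_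
  · exact (hμ x hx y hy).trans (by gcongr; linarith)
  · exact (hν x hx y hy).trans (by gcongr; linarith)

end Controlled

theorem grid_discretization_upper_general (d : ℕ) {α : NNReal} (hα : α ≤ 1) (C : NNReal) :
    ∃ K > (0 : ℝ), ∀ P Q : Measure (Euc d), IsProbabilityMeasure P → IsProbabilityMeasure Q →
      HasHolderDensity C α P → HasHolderDensity C α Q →
      ∀ h : ℝ, 0 < h → (∃ L : ℕ, 0 < L ∧ h = 1 / L) →
        W2sq (P.map (gridSnap d h)) (Q.map (gridSnap d h)) ≤ W2sq P Q + K * h ^ (1 + α : ℝ) := by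
  refine ⟨2 * d * (C * √d ^ (α : ℝ) + (1 + C * √d ^ (α : ℝ)) * d) + 3 / 2 * d + 1, by positivity,
    fun P Q _ _ hP hQ h hh => ?_⟩
  rintro ⟨L, hL, rfl⟩
  have hLh : (1 / L : NNReal) * L = 1 := one_div_mul_cancel (by positivity)
  have hle := W2sq_map_gridSnap_le (h := 1 / L) hP hQ hα (by positivity) hLh
  push_cast at hle
  exact hle.trans <| add_le_add_right
    (mul_le_mul_of_nonneg_right (le_add_of_nonneg_right zero_le_one) (by positivity)) _

/-- Discretization error upper bound:
`W₂²(G_h#P, G_h#Q) ≤ W₂²(P,Q) + K h^{1+α}`. -/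
theorem grid_discretization_upper (d : ℕ) (hd : 1 ≤ d) (α C : ℝ)
    (hα0 : 0 < α) (hα1 : α < 1) (hC : 1 < C) :
    ∃ K > (0 : ℝ), ∀ P Q : Measure (Euc d),
      IsProbabilityMeasure P → IsProbabilityMeasure Q →
      IsControlled d α C P Q →
      ∀ h : ℝ, 0 < h → (∃ L : ℕ, 0 < L ∧ h = 1 / L) →
        W2sq (P.map (gridSnap d h)) (Q.map (gridSnap d h))
          ≤ W2sq P Q + K * h ^ (1 + α) := by
  lift α to NNReal using hα0.le
  lift C to NNReal using zero_le_one.trans hC.le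
  obtain ⟨K, hK, hle⟩ := grid_discretization_upper_general d (mod_cast hα1.le) C
  exact ⟨K, hK, fun P Q hP hQ hPQ => hle P Q hP hQ hPQ.hasHolderDensity.1 hPQ.hasHolderDensity.2⟩
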